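/- Let n ≥ 2 be an integer, m = 2n+4, and 𝒜 = { {1}, {2}, {2n+3}, {2n+4} } ∪ { S ⊆ {3,…,2n+2} : |S| = n }. Fix f > 0, define v^agg(x) = max{ f·y : y ∈ [0,1], ∑_{j∈S} x_j ≥ y for every S ∈ 𝒜 } for x ∈ [0,1]^m, and let g(x) = max{ ∑_{β∈{0,1}^m} α_β v^agg(β) : α_β ≥ 0, ∑_β α_β = 1, ∑_β α_β β = x } be the concavification of the restriction of v^agg to {0,1}^m. Then g(x) ≤ (6/n)·f for every x ∈ [0,1]^m with ∑_{j=1}^{m} x_j ≤ 6. -/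

import Mathlib

/-- `v^agg(x) = sup{ f·y : y ∈ [0,1], ∑_{j∈S} x_j ≥ y for every S ∈ 𝒜 }`. -/
noncomputable def vagg {N : Type*} (A : Set (Finset N)) (f : ℝ) (x : N → ℝ) : ℝ :=
  sSup {t | ∃ y : ℝ, y ∈ Set.Icc (0 : ℝ) 1 ∧
    (∀ S ∈ A, y ≤ ∑ j ∈ S, x j) ∧ t = f * y}

/-- The indicator vector (in `{0,1}^ℕ`) of a finite set `T` of node labels. -/
def indVec (T : Finset ℕ) : ℕ → ℝ := fun j => if j ∈ T then 1 else 0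

/-- The concavification of `h : {0,1}^m → ℝ`, where binary vectors on the node set
`{1,…,m}` are identified with subsets `T ⊆ {1,…,m}`:
`g(x) = max{ ∑_β α_β h(β) : α ≥ 0, ∑_β α_β = 1, ∑_β α_β β = x }`. -/
noncomputable def concavifyN (m : ℕ) (h : Finset ℕ → ℝ) (x : ℕ → ℝ) : ℝ :=
  sSup {t | ∃ α : Finset ℕ → ℝ,
    (∀ T ∈ (Finset.Icc 1 m).powerset, 0 ≤ α T) ∧
    (∑ T ∈ (Finset.Icc 1 m).powerset, α T) = 1 ∧
    (∀ j ∈ Finset.Icc 1 m, (∑ T ∈ (Finset.Icc 1 m).powerset, α T * indVec T j) = x j) ∧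
    t = ∑ T ∈ (Finset.Icc 1 m).powerset, α T * h T}

/-- The family of Proposition 4(ii): on the nodes `{1,…,2n+4}` (labelled by naturals),
`𝒜 = { {1}, {2}, {2n+3}, {2n+4} } ∪ { S ⊆ {3,…,2n+2} : |S| = n }`. -/
def A2 (n : ℕ) : Set (Finset ℕ) :=
  ({ {1}, {2}, {2 * n + 3}, {2 * n + 4} } : Set (Finset ℕ)) ∪
    {S : Finset ℕ | S ⊆ Finset.Icc 3 (2 * n + 2) ∧ S.card = n}

/-!
On a binary point, `v^agg` vanishes unless the support `T` meets every member of `𝒜`, and it never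
exceeds `f`. A set meeting every `n`-element subset of the `2n` middle nodes leaves fewer than `n`
of them uncovered, hence has more than `n` elements. So `T ↦ f·|T|/n` majorizes `v^agg` on
`{0,1}^m`; being linear, it also majorizes the concavification, and `∑ x_j ≤ 6` finishes.
-/

section Vagg

variable {N : Type*} {A : Set (Finset N)} {f : ℝ} {x : N → ℝ}

theorem vagg_le (hf : 0 ≤ f) : vagg A f x ≤ f := by
  refine Real.sSup_le ?_ hf
  rintro _ ⟨y, ⟨-, hy⟩, -, rfl⟩
  exact mul_le_of_le_one_right hf hy

theorem vagg_le_mul_sum (hf : 0 ≤ f) {S : Finset N} (hS : S ∈ A) (hx : 0 ≤ ∑ j ∈ S, x j) :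
    vagg A f x ≤ f * ∑ j ∈ S, x j := by
  refine Real.sSup_le ?_ (mul_nonneg hf hx)
  rintro _ ⟨y, -, hy, rfl⟩
  exact mul_le_mul_of_nonneg_left (hy S hS) hf

end Vagg

section Transversal

/-- `T` is a transversal (hitting set) of the family `A`: it meets every member of `A`. These are
the supports of the binary points on which `vagg A f` need not vanish. -/
def IsTransversal {N : Type*} (A : Set (Finset N)) (T : Finset N) : Prop :=
  ∀ S ∈ A, ¬Disjoint S T

theorem IsTransversal.card_lt_card_add {N : Type*} {A : Set (Finset N)} {T V : Finset N} {n : ℕ}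
    (hT : IsTransversal A T) (hA : ∀ S ⊆ V, S.card = n → S ∈ A) : V.card < T.card + n := by
  classical
  by_contra! hcard
  have huncovered : n ≤ (V \ T).card := by
    have := Finset.le_card_sdiff T V
    omega
  obtain ⟨S, hSVT, hSn⟩ := Finset.exists_subset_card_eq huncovered
  exact hT S (hA S (hSVT.trans Finset.sdiff_subset) hSn)
    (Finset.sdiff_disjoint.mono_left hSVT)

theorem lt_card_of_isTransversal_A2 {n : ℕ} {T : Finset ℕ} (hT : IsTransversal (A2 n) T) :
    n < T.card := by
  have h := hT.card_lt_card_add (V := Finset.Icc 3 (2 * n + 2)) (n := n)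
    fun S hS hcard => Or.inr ⟨hS, hcard⟩
  rw [Nat.card_Icc] at h
  omega

variable {A : Set (Finset ℕ)} {f : ℝ} {T : Finset ℕ}

theorem vagg_indVec_nonpos_of_not_isTransversal (hf : 0 ≤ f) (hT : ¬IsTransversal A T) :
    vagg A f (indVec T) ≤ 0 := by
  simp only [IsTransversal, not_forall, not_not] at hT
  obtain ⟨S, hS, hdisj⟩ := hT
  have hsum : ∑ j ∈ S, indVec T j = 0 :=
    Finset.sum_eq_zero fun j hj => if_neg (Finset.disjoint_left.mp hdisj hj)
  simpa only [hsum, mul_zero] using vagg_le_mul_sum hf hS hsum.ge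

theorem vagg_indVec_le_div_mul_card (hf : 0 ≤ f) {k : ℕ} (hk : 0 < k)
    (hT : IsTransversal A T → k ≤ T.card) : vagg A f (indVec T) ≤ f / k * T.card := by
  by_cases hAT : IsTransversal A T
  · have hk' : (0 : ℝ) < k := Nat.cast_pos.mpr hk
    calc vagg A f (indVec T) ≤ f := vagg_le hf
      _ = f / k * k := (div_mul_cancel₀ f hk'.ne').symm
      _ ≤ f / k * T.card := by gcongr; exact hT hAT
  · exact (vagg_indVec_nonpos_of_not_isTransversal hf hAT).trans (by positivity)

end Transversal

section Concavification

variable {m : ℕ} {x : ℕ → ℝ}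

theorem sum_mul_indVec {s T : Finset ℕ} (hT : T ⊆ s) (c : ℕ → ℝ) :
    ∑ j ∈ s, c j * indVec T j = ∑ j ∈ T, c j := by
  simp only [indVec, mul_ite, mul_one, mul_zero, Finset.sum_ite_mem, Finset.inter_eq_right.mpr hT]

-- Outside the cube no `α` is admissible and `concavifyN` takes the junk value `sSup ∅ = 0`.
theorem concavifyN_le_of_le_affine {h : Finset ℕ → ℝ} {b : ℝ} {c : ℕ → ℝ}
    (hh : ∀ T ⊆ Finset.Icc 1 m, h T ≤ b + ∑ j ∈ T, c j)
    (hnonneg : 0 ≤ b + ∑ j ∈ Finset.Icc 1 m, c j * x j) :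
    concavifyN m h x ≤ b + ∑ j ∈ Finset.Icc 1 m, c j * x j := by
  refine Real.sSup_le ?_ hnonneg
  rintro _ ⟨α, hα, hα_sum, hα_x, rfl⟩
  have hbary : ∑ T ∈ (Finset.Icc 1 m).powerset, α T * ∑ j ∈ T, c j =
      ∑ j ∈ Finset.Icc 1 m, c j * x j := by
    calc ∑ T ∈ (Finset.Icc 1 m).powerset, α T * ∑ j ∈ T, c j
        = ∑ T ∈ (Finset.Icc 1 m).powerset, ∑ j ∈ Finset.Icc 1 m, c j * (α T * indVec T j) :=
          Finset.sum_congr rfl fun T hT => by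
            simp only [← sum_mul_indVec (Finset.mem_powerset.mp hT), Finset.mul_sum,
              mul_left_comm]
      _ = ∑ j ∈ Finset.Icc 1 m, c j * x j := by
          rw [Finset.sum_comm]
          exact Finset.sum_congr rfl fun j hj => by rw [← Finset.mul_sum, hα_x j hj]
  calc ∑ T ∈ (Finset.Icc 1 m).powerset, α T * h T
      ≤ ∑ T ∈ (Finset.Icc 1 m).powerset, α T * (b + ∑ j ∈ T, c j) :=
        Finset.sum_le_sum fun T hT =>
          mul_le_mul_of_nonneg_left (hh T (Finset.mem_powerset.mp hT)) (hα T hT)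
    _ = b + ∑ j ∈ Finset.Icc 1 m, c j * x j := by
        simp only [mul_add, Finset.sum_add_distrib, ← Finset.sum_mul, hα_sum, one_mul, hbary]

theorem concavifyN_le_mul_sum {h : Finset ℕ → ℝ} {c : ℝ} (hc : 0 ≤ c)
    (hx : ∀ j ∈ Finset.Icc 1 m, 0 ≤ x j) (hh : ∀ T ⊆ Finset.Icc 1 m, h T ≤ c * T.card) :
    concavifyN m h x ≤ c * ∑ j ∈ Finset.Icc 1 m, x j := by
  have hlinear := concavifyN_le_of_le_affine (x := x) (b := 0) (c := fun _ => c)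
    (fun T hT => by simpa [mul_comm] using hh T hT)
    (by simpa [← Finset.mul_sum] using mul_nonneg hc (Finset.sum_nonneg hx))
  simpa only [zero_add, ← Finset.mul_sum] using hlinear

theorem concavifyN_vagg_le {A : Set (Finset ℕ)} {f : ℝ} {k : ℕ} (hf : 0 ≤ f) (hk : 0 < k)
    (hA : ∀ T ⊆ Finset.Icc 1 m, IsTransversal A T → k ≤ T.card)
    (hx : ∀ j ∈ Finset.Icc 1 m, 0 ≤ x j) :
    concavifyN m (fun T => vagg A f (indVec T)) x ≤ f / k * ∑ j ∈ Finset.Icc 1 m, x j :=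
  concavifyN_le_mul_sum (by positivity) hx fun T hT => vagg_indVec_le_div_mul_card hf hk (hA T hT)

end Concavification

/-- upper bound in the proof of Proposition 4(ii) of the paper.
On the instance `A2 n` with `m = 2n+4`, the concavification `g` of the restriction of
`v^agg` to binary points satisfies `g(x) ≤ (6/n)·f` for every `x ∈ [0,1]^m` with
`∑_{j=1}^m x_j ≤ 6`. -/
theorem stmt_17 (n : ℕ) (hn : 2 ≤ n) (f : ℝ) (hf : 0 < f) (x : ℕ → ℝ)
    (hx : ∀ j ∈ Finset.Icc 1 (2 * n + 4), x j ∈ Set.Icc (0 : ℝ) 1)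
    (hb : (∑ j ∈ Finset.Icc 1 (2 * n + 4), x j) ≤ 6) :
    concavifyN (2 * n + 4) (fun T => vagg (A2 n) f (indVec T)) x ≤ 6 / (n : ℝ) * f := by
  calc concavifyN (2 * n + 4) (fun T => vagg (A2 n) f (indVec T)) x
      ≤ f / n * ∑ j ∈ Finset.Icc 1 (2 * n + 4), x j :=
        concavifyN_vagg_le hf.le (by omega) (fun _ _ hT => (lt_card_of_isTransversal_A2 hT).le)
          fun j hj => (hx j hj).1
    _ ≤ f / n * 6 := by gcongr
    _ = 6 / (n : ℝ) * f := by ring
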